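/- arXiv:1907.11476 — 2 statements merged into one kernel-verified Lean document; each statement's English description precedes it below -/
import Mathlib

section
/- Let φ : ℕ → ℂ. Then φ belongs to R₊(T_∞), i.e. the kernel (x,y) ↦ φ(d(x,y)) is positive definite on the homogeneous tree T_∞ of countably infinite degree, if and only if there exists a positive finite Borel measure μ on the interval [-1,1] such that φ(n) = ∫_{[-1,1]} s^n dμ(s) for all n ∈ ℕ. -/
open MeasureTheory Filter Finset
open scoped ComplexOrder

/-- The polynomials `P_n^{(q)}`. -/
noncomputable def treeP (q : ℕ) : ℕ → ℝ → ℝ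
  | 0, _ => 1
  | 1, x => x
  | (n+2), x => (1 + 1/(q:ℝ)) * x * treeP q (n+1) x - (1/(q:ℝ)) * treeP q n x

/-- The polynomials `Q_n^{(q)}`. -/
noncomputable def treeQ (q : ℕ) : ℕ → ℝ → ℝ
  | 0, _ => 1
  | 1, x => (1 + 1/(q:ℝ)) * x
  | (n+2), x => (1 + 1/(q:ℝ)) * x * treeQ q (n+1) x - (1/(q:ℝ)) * treeQ q n x

/-- A kernel `ψ` on a set `X` is positive definite. -/
def IsPDKernel {X : Type*} (ψ : X → X → ℂ) : Prop :=
  ∀ (n : ℕ) (x : Fin n → X) (z : Fin n → ℂ),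
    0 ≤ ∑ i, ∑ j, ψ (x i) (x j) * (starRingEnd ℂ) (z i) * z j

/-- `G` is a `(q+1)`-homogeneous tree: connected, acyclic, every vertex has exactly
`q+1` neighbours. -/
def IsHomTree {V : Type} (G : SimpleGraph V) (q : ℕ) : Prop :=
  G.Connected ∧ G.IsAcyclic ∧ ∀ v : V, (G.neighborSet v).ncard = q + 1

/-- `G` is a homogeneous tree of countably infinite degree. -/
def IsInfTree {V : Type} (G : SimpleGraph V) : Prop :=
  G.Connected ∧ G.IsAcyclic ∧ ∀ v : V, (G.neighborSet v).Countable ∧ (G.neighborSet v).Infinite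

/-!
Deleting an edge cuts a tree into two sides, and `d(x, y)` is the number of edges that separate `x`
from `y`. For `|s| ≤ 1` the kernel with value `1` on pairs on the same side and `s` on pairs on
opposite sides is positive definite, hence so is the product `s ^ d(x, y)` of these kernels, and so
is its integral against a positive measure.

Conversely, vertices at distances `k` and `l` from a root, on two different rays, have distance
`k + l`. Averaging the kernel over more and more rays leaves only such pairs in the limit, so
`(k, l) ↦ φ (k + l)` is positive definite. The linear functional `L` on polynomials with
`L (X ^ n) = φ n` is therefore nonnegative on squares, and since `φ` is bounded, iterating the
Cauchy–Schwarz inequality gives `|L (X * q ^ 2)| ≤ L (q ^ 2)`. Splitting off the roots of a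
polynomial that is positive on `[-1, 1]` shows that `L` is nonnegative on it, and the theorems of
M. Riesz (extension) and Riesz–Markov–Kakutani produce the measure.
-/

namespace IsPDKernel

variable {X : Type*} {ψ χ : X → X → ℂ}

theorem sum_nonneg (hψ : IsPDKernel ψ) {ι : Type*} [Fintype ι] (x : ι → X) (z : ι → ℂ) :
    0 ≤ ∑ i, ∑ j, ψ (x i) (x j) * (starRingEnd ℂ) (z i) * z j := by
  let e := (Fintype.equivFin ι).symm
  simpa only [Function.comp_apply,
    fun i => e.sum_comp fun j => ψ (x (e i)) (x j) * (starRingEnd ℂ) (z (e i)) * z j,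
    e.sum_comp fun i => ∑ j, ψ (x i) (x j) * (starRingEnd ℂ) (z i) * z j]
    using hψ _ (x ∘ e) (z ∘ e)

theorem one : IsPDKernel fun _ _ : X => (1 : ℂ) := by
  intro n _ z
  calc (0 : ℂ) ≤ star (∑ i, z i) * ∑ j, z j := star_mul_self_nonneg _
    _ = ∑ i, ∑ j, 1 * (starRingEnd ℂ) (z i) * z j := by
      simp only [one_mul, ← Finset.sum_mul_sum, starRingEnd_apply, star_sum]

theorem add (hψ : IsPDKernel ψ) (hχ : IsPDKernel χ) : IsPDKernel fun x y => ψ x y + χ x y := by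
  intro n x z
  simpa only [add_mul, Finset.sum_add_distrib] using add_nonneg (hψ n x z) (hχ n x z)

theorem const_mul (hψ : IsPDKernel ψ) {c : ℝ} (hc : 0 ≤ c) : IsPDKernel fun x y => c * ψ x y := by
  intro n x z
  simpa only [mul_assoc, Finset.mul_sum] using
    mul_nonneg (Complex.zero_le_real.mpr hc) (hψ n x z)

theorem mul_mul_conj (hψ : IsPDKernel ψ) (f : X → ℂ) :
    IsPDKernel fun x y => f x * ψ x y * (starRingEnd ℂ) (f y) := by
  intro n x z
  convert hψ n x fun i => (starRingEnd ℂ) (f (x i)) * z i using 1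
  refine Finset.sum_congr rfl fun i _ => Finset.sum_congr rfl fun j _ => ?_
  rw [map_mul, Complex.conj_conj]
  ring

open Classical in
theorem mul_cut (hψ : IsPDKernel ψ) {s : ℝ} (hs : |s| ≤ 1) (A : Set X) :
    IsPDKernel fun x y => ψ x y * if (x ∈ A ↔ y ∈ A) then 1 else (s : ℂ) := by
  obtain ⟨hs₁, hs₂⟩ := abs_le.mp hs
  let ε : X → ℂ := fun x => if x ∈ A then 1 else -1
  convert (hψ.const_mul (c := (1 + s) / 2) (by linarith)).add
    ((hψ.mul_mul_conj ε).const_mul (c := (1 - s) / 2) (by linarith)) using 3 with x y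
  by_cases hx : x ∈ A <;> by_cases hy : y ∈ A <;> simp [ε, hx, hy] <;> ring

open Classical in
theorem pow_card_cuts {s : ℝ} (hs : |s| ≤ 1) {ι : Type*} (A : ι → Set X) (E : Finset ι) :
    IsPDKernel fun x y => (s : ℂ) ^ #{e ∈ E | ¬(x ∈ A e ↔ y ∈ A e)} := by
  induction E using Finset.induction_on with
  | empty => simpa only [filter_empty, card_empty, pow_zero] using one
  | insert e E he ih =>
    convert ih.mul_cut hs (A e) using 3 with x y
    by_cases h : x ∈ A e ↔ y ∈ A e
    · simp only [filter_insert, h, not_true_eq_false, if_false, if_true, mul_one]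
    · rw [filter_insert, if_pos h, card_insert_of_notMem (by simp [he]), pow_succ, if_neg h]

theorem integral {Ω : Type*} [MeasurableSpace Ω] {μ : Measure Ω} {Ψ : Ω → X → X → ℂ}
    (hΨ : ∀ ω, IsPDKernel (Ψ ω)) (hint : ∀ x y, Integrable (fun ω => Ψ ω x y) μ) :
    IsPDKernel fun x y => ∫ ω, Ψ ω x y ∂μ := by
  intro n x z
  have hterm (i j : Fin n) :
      Integrable (fun ω => Ψ ω (x i) (x j) * (starRingEnd ℂ) (z i) * z j) μ :=
    ((hint _ _).mul_const _).mul_const _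
  calc (0 : ℂ) ≤ ∫ ω, ∑ i, ∑ j, Ψ ω (x i) (x j) * (starRingEnd ℂ) (z i) * z j ∂μ :=
        integral_nonneg fun ω => hΨ ω n x z
    _ = ∑ i, ∑ j, (∫ ω, Ψ ω (x i) (x j) ∂μ) * (starRingEnd ℂ) (z i) * z j := by
        rw [integral_finsetSum _ fun i _ => integrable_finsetSum _ fun j _ => hterm i j]
        simp only [integral_finsetSum _ fun j _ => hterm _ j, integral_mul_const]

/-- Averaging over `N` of the copies, only `N` of the `N ^ 2` pairs of copies are diagonal, so the
diagonal blocks disappear as `N → ∞`. -/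
theorem of_offDiag_blocks (hψ : IsPDKernel ψ) {κ : Type*} {A B : κ → κ → ℂ} (x : ℕ → κ → X)
    (hdiag : ∀ i k l, ψ (x i k) (x i l) = B k l)
    (hoff : ∀ i j k l, i ≠ j → ψ (x i k) (x j l) = A k l) : IsPDKernel A := by
  intro n k z
  set a := ∑ p, ∑ q, A (k p) (k q) * (starRingEnd ℂ) (z p) * z q with ha
  set b := ∑ p, ∑ q, B (k p) (k q) * (starRingEnd ℂ) (z p) * z q with hb
  have hblock (i j : ℕ) :
      ∑ p, ∑ q, ψ (x i (k p)) (x j (k q)) * (starRingEnd ℂ) (z p) * z q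
        = a + if i = j then b - a else 0 := by
    split_ifs with hij
    · simp only [hij, hdiag, hb, add_sub_cancel]
    · simp only [hoff i j _ _ hij, ha, add_zero]
  have hsum (N : ℕ) : 0 ≤ (N : ℂ) * (N * a + (b - a)) := by
    have h := hψ.sum_nonneg (fun r : Fin N × Fin n => x r.1 (k r.2)) fun r => z r.2
    simp only [Fintype.sum_prod_type, Finset.sum_comm (s := (univ : Finset (Fin n)))
      (t := (univ : Finset (Fin N))), hblock, Fin.val_inj] at h
    simpa only [Finset.sum_add_distrib, Finset.sum_const, Finset.sum_ite_eq, mem_univ, if_true,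
      card_univ, Fintype.card_fin, nsmul_eq_mul, mul_add] using h
  have hmean (N : ℕ) : 0 ≤ a + 1 / ((N : ℂ) + 1) * (b - a) := by
    have hN : (N : ℂ) + 1 ≠ 0 := N.cast_add_one_ne_zero
    have hsq : (0 : ℂ) ≤ (1 / ((N : ℂ) + 1)) ^ 2 := by positivity
    convert mul_nonneg hsq (hsum (N + 1)) using 1
    push_cast
    field_simp
  have hlim : Tendsto (fun N : ℕ => a + 1 / ((N : ℂ) + 1) * (b - a)) atTop (nhds a) := by
    simpa using (tendsto_one_div_add_atTop_nhds_zero_nat.mul_const (b - a)).const_add a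
  exact ge_of_tendsto' hlim hmean

theorem two_point (hψ : IsPDKernel ψ) (x y : X) (a b : ℂ) :
    0 ≤ ψ x x * (starRingEnd ℂ) a * a + ψ x y * (starRingEnd ℂ) a * b
      + (ψ y x * (starRingEnd ℂ) b * a + ψ y y * (starRingEnd ℂ) b * b) := by
  simpa [Fin.sum_univ_two] using hψ 2 ![x, y] ![a, b]

theorem conj_symm (hψ : IsPDKernel ψ) (x y : X) : (starRingEnd ℂ) (ψ x y) = ψ y x := by
  have hx : (ψ x x).im = 0 := by
    simpa using (Complex.le_def.mp (hψ.two_point x y 1 0)).2.symm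
  have hy : (ψ y y).im = 0 := by
    simpa using (Complex.le_def.mp (hψ.two_point x y 0 1)).2.symm
  have him : (ψ x y).im + (ψ y x).im = 0 := by
    simpa [hx, hy] using (Complex.le_def.mp (hψ.two_point x y 1 1)).2.symm
  have hre : (ψ x y).re + -(ψ y x).re = 0 := by
    simpa [hx, hy] using (Complex.le_def.mp (hψ.two_point x y 1 Complex.I)).2.symm
  apply Complex.ext
  · rw [Complex.conj_re]; linarith
  · rw [Complex.conj_im]; linarith

theorem abs_re_le (hψ : IsPDKernel ψ) (x y : X) :
    |(ψ x y).re| ≤ ((ψ x x).re + (ψ y y).re) / 2 := by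
  have hsymm : (ψ x y).re = (ψ y x).re := by
    rw [← hψ.conj_symm, Complex.conj_re]
  have hplus : 0 ≤ (ψ x x).re + (ψ x y).re + ((ψ y x).re + (ψ y y).re) := by
    simpa using (Complex.le_def.mp (hψ.two_point x y 1 1)).1
  have hminus : 0 ≤ (ψ x x).re + -(ψ x y).re + (-(ψ y x).re + (ψ y y).re) := by
    simpa using (Complex.le_def.mp (hψ.two_point x y 1 (-1))).1
  rw [abs_le]
  constructor <;> linarith

end IsPDKernel

section Trees

variable {V : Type*} {G : SimpleGraph V}

theorem mem_edges_iff_not_reachable_deleteEdges (hG : G.IsAcyclic) {x y : V} {w : G.Walk x y}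
    (hw : w.IsPath) (e : Sym2 V) : e ∈ w.edges ↔ ¬(G.deleteEdges {e}).Reachable x y := by
  classical
  refine ⟨fun he => ?_, w.mem_edges_of_not_reachable_deleteEdges⟩
  induction e with | h a b =>
  rw [SimpleGraph.reachable_deleteEdges_iff_exists_walk]
  rintro ⟨w', he'⟩
  have hpath : w = w'.bypass :=
    congrArg Subtype.val ((hG.subsingleton_path x y).elim ⟨w, hw⟩ ⟨w'.bypass, w'.bypass_isPath⟩)
  exact he' (w'.edges_bypass_subset_edges (hpath ▸ he))

theorem exists_finset_separating_edges (hG : G.IsTree) (x y : V) :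
    ∃ F : Finset (Sym2 V), #F = G.dist x y ∧
      ∀ e, e ∈ F ↔ ¬(G.deleteEdges {e}).Reachable x y := by
  classical
  obtain ⟨w, hw, hlen⟩ := hG.connected.exists_path_of_dist x y
  refine ⟨w.edges.toFinset, ?_, fun e => ?_⟩
  · rw [List.toFinset_card_of_nodup hw.isTrail.edges_nodup, w.length_edges, hlen]
  · rw [List.mem_toFinset, mem_edges_iff_not_reachable_deleteEdges hG.isAcyclic hw]

theorem reachable_deleteEdges_or (hG : G.Connected) (a b x : V) :
    (G.deleteEdges {s(a, b)}).Reachable x a ∨ (G.deleteEdges {s(a, b)}).Reachable x b := by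
  obtain ⟨w⟩ := hG.preconnected x a
  induction w with
  | nil => exact .inl .rfl
  | @cons x y c hxy _ ih =>
    by_cases he : s(x, y) = s(c, b)
    · rcases Sym2.eq_iff.mp he with ⟨rfl, -⟩ | ⟨rfl, -⟩
      · exact .inl .rfl
      · exact .inr .rfl
    · have hadj : (G.deleteEdges {s(c, b)}).Adj x y := by
        rw [SimpleGraph.deleteEdges_adj]
        exact ⟨hxy, he⟩
      exact ih.imp hadj.reachable.trans hadj.reachable.trans

theorem reachable_deleteEdges_iff_iff (hG : G.Connected) (e : Sym2 V) (o x y : V) :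
    (G.deleteEdges {e}).Reachable x y ↔
      ((G.deleteEdges {e}).Reachable o x ↔ (G.deleteEdges {e}).Reachable o y) := by
  induction e with | h a b =>
  refine ⟨fun h => ⟨fun hx => hx.trans h, fun hy => hy.trans h.symm⟩, fun h => ?_⟩
  have ho := reachable_deleteEdges_or hG a b o
  have hx := reachable_deleteEdges_or hG a b x
  have hy := reachable_deleteEdges_or hG a b y
  grind [SimpleGraph.Reachable.trans, SimpleGraph.Reachable.symm]

theorem isPDKernel_pow_dist (hG : G.IsTree) {s : ℝ} (hs : |s| ≤ 1) :
    IsPDKernel fun x y => (s : ℂ) ^ G.dist x y := by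
  classical
  obtain ⟨o⟩ := hG.connected.nonempty
  choose F hcard hF using exists_finset_separating_edges hG
  intro n x z
  let E : Finset (Sym2 V) := univ.biUnion fun p : Fin n × Fin n => F (x p.1) (x p.2)
  have hdist (i j : Fin n) : G.dist (x i) (x j) = #{e ∈ E |
      ¬((G.deleteEdges {e}).Reachable o (x i) ↔ (G.deleteEdges {e}).Reachable o (x j))} := by
    rw [← hcard]
    congr 1
    ext e
    rw [mem_filter, ← reachable_deleteEdges_iff_iff hG.connected, hF,
      iff_and_self, ← hF]
    exact fun he => mem_biUnion.mpr ⟨(i, j), mem_univ _, he⟩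
  simpa only [hdist, Set.mem_ofPred_eq] using IsPDKernel.pow_card_cuts hs
    (fun e => {v | (G.deleteEdges {e}).Reachable o v}) E n x z

theorem isPDKernel_integral_pow_dist (hG : G.IsTree) (μ : Measure (Set.Icc (-1 : ℝ) 1))
    [IsFiniteMeasure μ] :
    IsPDKernel fun x y => ∫ s, (((s : ℝ) ^ G.dist x y : ℝ) : ℂ) ∂μ := by
  refine IsPDKernel.integral (fun s => ?_) fun x y => ?_
  · simpa only [Complex.ofReal_pow] using isPDKernel_pow_dist hG (abs_le.mpr s.2)
  · exact Continuous.integrable_of_hasCompactSupport (by fun_prop)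
      (HasCompactSupport.of_compactSpace _)

theorem abs_sub_le_dist (hG : G.Connected) (f : V → ℤ) (hf : ∀ x y, G.Adj x y → |f x - f y| ≤ 1)
    (x y : V) : |f x - f y| ≤ G.dist x y := by
  have hwalk : ∀ {x y : V} (w : G.Walk x y), |f x - f y| ≤ w.length := by
    intro x y w
    induction w with
    | nil => simp
    | @cons x y z hxy w ih =>
      calc |f x - f z| ≤ |f x - f y| + |f y - f z| := abs_sub_le _ _ _
        _ ≤ 1 + w.length := add_le_add (hf x y hxy) ih
        _ = (w.cons hxy).length := by rw [SimpleGraph.Walk.length_cons]; push_cast; ring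
  obtain ⟨w, hw⟩ := hG.exists_walk_length_eq_dist x y
  exact hw ▸ hwalk w

/-- In a cycle, a vertex of largest level would have two neighbours of level at most its own. -/
theorem isAcyclic_of_level {α : Type*} [LinearOrder α] (ℓ : V → α)
    (hℓ : ∀ x y z, G.Adj x y → G.Adj x z → ℓ y ≤ ℓ x → ℓ z ≤ ℓ x → y = z) : G.IsAcyclic := by
  classical
  intro u c hc
  obtain ⟨x, hx, hmax⟩ := c.support.toFinset.exists_max_image ℓ ⟨u, by simp⟩
  rw [List.mem_toFinset] at hx
  have hle (v : V) (hv : v ∈ (c.rotate x hx).support) : ℓ v ≤ ℓ x :=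
    hmax v (by simpa using hv)
  have hcx := hc.rotate hx
  exact hcx.snd_ne_penultimate (hℓ x _ _ (SimpleGraph.Walk.adj_snd hcx.not_nil)
    (SimpleGraph.Walk.adj_penultimate hcx.not_nil).symm
    (hle _ (SimpleGraph.Walk.getVert_mem_support ..))
    (hle _ (SimpleGraph.Walk.getVert_mem_support ..)))

end Trees

/-- The model of the homogeneous tree of countably infinite degree used here: its vertices are the
finite words over `ℕ`, and a word `l` is joined to the words `a :: l`, so that `[]` is the root. -/
def wordTree : SimpleGraph (List ℕ) where
  Adj u v := (∃ a, v = a :: u) ∨ ∃ a, u = a :: v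
  symm := ⟨fun _ _ h => h.symm⟩
  loopless := ⟨fun u h => by rcases h with ⟨a, h⟩ | ⟨a, h⟩ <;> simpa using congrArg List.length h⟩

namespace wordTree

theorem adj_cons (a : ℕ) (l : List ℕ) : wordTree.Adj (a :: l) l := .inr ⟨a, rfl⟩

theorem connected : wordTree.Connected := by
  have hroot (l : List ℕ) : wordTree.Reachable l [] := by
    induction l with
    | nil => exact .rfl
    | cons a l ih => exact (adj_cons a l).reachable.trans ih
  exact ⟨fun u v => (hroot u).trans (hroot v).symm⟩

theorem isAcyclic : wordTree.IsAcyclic := by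
  have htail (u v : List ℕ) (huv : wordTree.Adj u v) (hlen : v.length ≤ u.length) :
      v = u.tail := by
    rcases huv with ⟨a, rfl⟩ | ⟨a, rfl⟩
    · simp at hlen
    · rfl
  exact isAcyclic_of_level List.length fun u v w huv huw hv hw =>
    (htail u v huv hv).trans (htail u w huw hw).symm

theorem isInfTree : IsInfTree wordTree := by
  refine ⟨connected, isAcyclic, fun l => ⟨Set.to_countable _, ?_⟩⟩
  have hinj : Function.Injective fun a : ℕ => a :: l := fun a b h => List.head_eq_of_cons_eq h
  refine (Set.infinite_range_of_injective hinj).mono ?_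
  rintro _ ⟨a, rfl⟩
  exact (adj_cons a l).symm

theorem dist_append_le (u v : List ℕ) : wordTree.dist (u ++ v) v ≤ u.length := by
  induction u with
  | nil => simp
  | cons a u ih =>
    calc wordTree.dist (a :: u ++ v) v
        ≤ wordTree.dist (a :: u ++ v) (u ++ v) + wordTree.dist (u ++ v) v := connected.dist_triangle
      _ ≤ 1 + u.length :=
        add_le_add (SimpleGraph.dist_eq_one_iff_adj.mpr (adj_cons a (u ++ v))).le ih
      _ = (a :: u).length := by rw [List.length_cons, add_comm]

theorem abs_sub_le_dist_of_cons (f : List ℕ → ℤ) (hf : ∀ a l, |f (a :: l) - f l| ≤ 1)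
    (u v : List ℕ) : |f u - f v| ≤ wordTree.dist u v := by
  refine abs_sub_le_dist connected f ?_ u v
  rintro x y (⟨a, rfl⟩ | ⟨a, rfl⟩)
  · rw [abs_sub_comm]
    exact hf a x
  · exact hf a y

theorem dist_replicate_of_ne {i j : ℕ} (hij : i ≠ j) (k l : ℕ) :
    wordTree.dist (List.replicate k i) (List.replicate l j) = k + l := by
  apply le_antisymm
  · have hk := dist_append_le (List.replicate k i) []
    have hl := dist_append_le (List.replicate l j) []
    rw [List.append_nil, List.length_replicate] at hk hl
    rw [SimpleGraph.dist_comm] at hl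
    exact connected.dist_triangle.trans (add_le_add hk hl)
  · let f : List ℕ → ℤ := fun w => w.count i - w.count j
    have hf (a : ℕ) (w : List ℕ) : |f (a :: w) - f w| ≤ 1 := by
      simp only [f, List.count_cons]
      split_ifs <;> simp_all
    have hk : f (List.replicate k i) = k := by simp [f, List.count_replicate, hij]
    have hl : f (List.replicate l j) = -l := by simp [f, List.count_replicate, hij.symm]
    have h := (le_abs_self _).trans
      (abs_sub_le_dist_of_cons f hf (List.replicate k i) (List.replicate l j))
    rw [hk, hl] at h
    omega

theorem dist_replicate_self (i k l : ℕ) :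
    wordTree.dist (List.replicate k i) (List.replicate l i) = (k - l) + (l - k) := by
  wlog hlk : l ≤ k generalizing k l
  · rw [SimpleGraph.dist_comm, this l k (by omega), add_comm]
  obtain ⟨m, rfl⟩ := Nat.exists_eq_add_of_le' hlk
  apply le_antisymm
  · have h := dist_append_le (List.replicate m i) (List.replicate l i)
    rw [List.replicate_append_replicate, List.length_replicate] at h
    omega
  · have h := (le_abs_self _).trans (abs_sub_le_dist_of_cons (fun w => w.length)
      (fun a w => by simp) (List.replicate (m + l) i) (List.replicate l i))
    simp only [List.length_replicate] at h
    omega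

theorem isPDKernel_hankel {φ : ℕ → ℂ} (h : IsPDKernel fun u v => φ (wordTree.dist u v)) :
    IsPDKernel fun k l : ℕ => φ (k + l) :=
  h.of_offDiag_blocks (fun i k => List.replicate k i)
    (B := fun k l => φ ((k - l) + (l - k)))
    (fun i k l => by rw [dist_replicate_self])
    fun i j k l hij => by rw [dist_replicate_of_ne hij]

theorem abs_re_le {φ : ℕ → ℂ} (h : IsPDKernel fun u v => φ (wordTree.dist u v)) (n : ℕ) :
    |(φ n).re| ≤ (φ 0).re := by
  have hdist : wordTree.dist (List.replicate n 0) [] = n := by simpa using dist_replicate_self 0 n 0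
  simpa [hdist] using h.abs_re_le (List.replicate n 0) []

end wordTree

section PositiveFunctionals

variable {K : Type*} [TopologicalSpace K] [CompactSpace K]

/-- If `L` is nonnegative on the elements that `ι` sends to nonnegative functions, then `L` kills
the kernel of `ι`, hence factors through the range of `ι`, where the Riesz extension theorem
applies because the constants dominate every function. -/
theorem exists_nonneg_extension {E : Type*} [AddCommGroup E] [Module ℝ E] (ι : E →ₗ[ℝ] C(K, ℝ))
    {e : E} (he : ι e = 1) (L : E →ₗ[ℝ] ℝ) (hL : ∀ p, 0 ≤ ι p → 0 ≤ L p) :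
    ∃ Λ : C(K, ℝ) →ₗ[ℝ] ℝ, (∀ f, 0 ≤ f → 0 ≤ Λ f) ∧ ∀ p, Λ (ι p) = L p := by
  have hker : L ∈ (LinearMap.ker ι).dualAnnihilator := by
    refine (Submodule.mem_dualAnnihilator L).mpr fun p hp => ?_
    rw [LinearMap.mem_ker] at hp
    refine le_antisymm ?_ (hL p hp.ge)
    simpa using hL (-p) (by simp [hp])
  rw [← LinearMap.range_dualMap_eq_dualAnnihilator_ker] at hker
  obtain ⟨L₀, rfl⟩ := hker
  obtain ⟨Λ, hext, hnonneg⟩ := riesz_extension (PointedCone.positive ℝ C(K, ℝ))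
    (L₀.toPMap (LinearMap.range ι))
    (by rintro ⟨_, p, rfl⟩ hp; exact hL p hp)
    fun f => ⟨⟨ι (‖f‖ • e), LinearMap.mem_range_self _ _⟩, fun x => by
      simpa [he, neg_le_iff_add_nonneg'] using f.neg_norm_le_apply x⟩
  exact ⟨Λ, hnonneg, fun p => hext ⟨ι p, LinearMap.mem_range_self _ _⟩⟩

variable [T2Space K] [MeasurableSpace K] [BorelSpace K]

theorem exists_measure_of_nonneg (Λ : C(K, ℝ) →ₗ[ℝ] ℝ) (hΛ : ∀ f, 0 ≤ f → 0 ≤ Λ f) :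
    ∃ μ : Measure K, IsFiniteMeasure μ ∧ ∀ f, Λ f = ∫ x, f x ∂μ := by
  let toC : CompactlySupportedContinuousMap K ℝ →ₗ[ℝ] C(K, ℝ) :=
    { toFun := fun f => f, map_add' := fun _ _ => rfl, map_smul' := fun _ _ => rfl }
  let Λ' := PositiveLinearMap.mk₀ (Λ ∘ₗ toC) fun f hf => hΛ _ hf
  exact ⟨RealRMK.rieszMeasure Λ', inferInstance, fun f =>
    (RealRMK.integral_rieszMeasure Λ' (.continuousMapEquiv f)).symm⟩

end PositiveFunctionals

theorem abs_le_abs_of_sq_le_mul {ι : Type*} {a : ι → ℝ} {B c : ℝ} (hB : ∀ i, |a i| ≤ B)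
    (ha : ∀ i, ∃ j, a i ^ 2 ≤ c * a j) (i : ι) : |a i| ≤ |c| := by
  have hbdd : BddAbove (Set.range fun i => |a i|) := ⟨B, by rintro _ ⟨i, rfl⟩; exact hB i⟩
  set M := ⨆ i, |a i|
  have hle (i : ι) : |a i| ≤ M := le_ciSup hbdd i
  have hM : 0 ≤ M := (abs_nonneg _).trans (hle i)
  have hsq (i : ι) : a i ^ 2 ≤ |c| * M := by
    obtain ⟨j, hj⟩ := ha i
    calc a i ^ 2 ≤ |c * a j| := hj.trans (le_abs_self _)
      _ = |c| * |a j| := abs_mul c (a j)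
      _ ≤ |c| * M := mul_le_mul_of_nonneg_left (hle j) (abs_nonneg c)
  have hMsqrt : M ≤ √(|c| * M) :=
    haveI : Nonempty ι := ⟨i⟩
    ciSup_le fun i => Real.abs_le_sqrt (hsq i)
  have hMsq : M ^ 2 ≤ |c| * M := (Real.le_sqrt hM (by positivity)).mp hMsqrt
  refine (hle i).trans ?_
  rcases hM.eq_or_lt with h0 | h0
  · exact h0 ▸ abs_nonneg c
  · exact le_of_mul_le_mul_right (by rwa [← sq]) h0

section MomentProblem

open Polynomial

/-- A linear functional on real polynomials is bounded positive if it is nonnegative on squares and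
its moments `L (X ^ n)` are bounded. These are the functionals that are integrals over `[-1, 1]`. -/
structure IsBoundedPositive (L : ℝ[X] →ₗ[ℝ] ℝ) : Prop where
  nonneg_mul_self : ∀ q, 0 ≤ L (q * q)
  bounded_moments : ∃ B, ∀ n, |L (X ^ n)| ≤ B

namespace IsBoundedPositive

variable {L : ℝ[X] →ₗ[ℝ] ℝ}

theorem apply_mul_sq_le (hL : IsBoundedPositive L) (p q : ℝ[X]) :
    L (p * q) ^ 2 ≤ L (p * p) * L (q * q) :=
  LinearMap.BilinForm.apply_sq_le_of_symm ((LinearMap.mul ℝ ℝ[X]).compr₂ L) hL.nonneg_mul_self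
    ⟨fun p q => congrArg L (mul_comm p q)⟩ p q

theorem exists_abs_apply_X_pow_mul_le (hL : IsBoundedPositive L) (p : ℝ[X]) :
    ∃ B, ∀ n, |L (X ^ n * p)| ≤ B := by
  induction p using Polynomial.induction_on' with
  | add p q hp hq =>
    obtain ⟨Bp, hp⟩ := hp
    obtain ⟨Bq, hq⟩ := hq
    refine ⟨Bp + Bq, fun n => ?_⟩
    rw [mul_add, map_add]
    exact (abs_add_le _ _).trans (add_le_add (hp n) (hq n))
  | monomial m a =>
    obtain ⟨B, hB⟩ := hL.bounded_moments
    refine ⟨|a| * B, fun n => ?_⟩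
    rw [X_pow_mul_monomial, ← smul_X_eq_monomial, map_smul, smul_eq_mul, abs_mul]
    exact mul_le_mul_of_nonneg_left (hB _) (abs_nonneg a)

theorem abs_apply_X_mul_mul_self_le (hL : IsBoundedPositive L) (q : ℝ[X]) :
    |L (X * (q * q))| ≤ L (q * q) := by
  obtain ⟨B, hB⟩ := hL.exists_abs_apply_X_pow_mul_le (q * q)
  have hsq (n : ℕ) : L (X ^ n * (q * q)) ^ 2 ≤ L (q * q) * L (X ^ (2 * n) * (q * q)) := by
    convert hL.apply_mul_sq_le q (X ^ n * q) using 3 <;> ring_nf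
  simpa only [pow_one, abs_of_nonneg (hL.nonneg_mul_self q)] using
    abs_le_abs_of_sq_le_mul hB (fun n => ⟨2 * n, hsq n⟩) 1

theorem comp_mulLeft (hL : IsBoundedPositive L) {r : ℝ[X]} (hr : ∀ q, 0 ≤ L (r * (q * q))) :
    IsBoundedPositive (L ∘ₗ LinearMap.mulLeft ℝ r) where
  nonneg_mul_self := hr
  bounded_moments := by
    simpa only [LinearMap.comp_apply, LinearMap.mulLeft_apply, mul_comm r] using
      hL.exists_abs_apply_X_pow_mul_le r

end IsBoundedPositive

/-- A nonconstant polynomial, positive on `[-1, 1]`, multiplication by which preserves bounded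
positive functionals. Positive polynomials are products of such factors and of a constant. -/
structure IsPositiveFactor (r : ℝ[X]) : Prop where
  natDegree_pos : 0 < r.natDegree
  eval_pos : ∀ x ∈ Set.Icc (-1 : ℝ) 1, 0 < r.eval x
  comp_mulLeft : ∀ L, IsBoundedPositive L → IsBoundedPositive (L ∘ₗ LinearMap.mulLeft ℝ r)

theorem isPositiveFactor_linear {t : ℝ} (ht : 1 < |t|) :
    IsPositiveFactor (C (t ^ 2) - C t * X) where
  natDegree_pos := by
    have ht0 : t ≠ 0 := abs_pos.mp (one_pos.trans ht)
    have h : (C (t ^ 2) - C t * X : ℝ[X]).natDegree = 1 := by compute_degree!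
    exact one_pos.trans_eq h.symm
  eval_pos x hx := by
    have h : t * x < t ^ 2 :=
      calc t * x ≤ |t| * |x| := (le_abs_self _).trans (abs_mul t x).le
        _ ≤ |t| * 1 := mul_le_mul_of_nonneg_left (abs_le.mpr hx) (abs_nonneg t)
        _ < |t| * |t| := mul_lt_mul_of_pos_left ht (one_pos.trans ht)
        _ = t ^ 2 := by rw [abs_mul_abs_self, sq]
    simpa using h
  comp_mulLeft L hL := hL.comp_mulLeft fun q => by
    have h : t * L (X * (q * q)) ≤ t ^ 2 * L (q * q) :=
      calc t * L (X * (q * q)) ≤ |t| * |L (X * (q * q))| := (le_abs_self _).trans (abs_mul _ _).le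
        _ ≤ |t| * (|t| * L (q * q)) := by
          refine mul_le_mul_of_nonneg_left ?_ (abs_nonneg t)
          exact (hL.abs_apply_X_mul_mul_self_le q).trans
            (le_mul_of_one_le_left (hL.nonneg_mul_self q) ht.le)
        _ = t ^ 2 * L (q * q) := by rw [← mul_assoc, abs_mul_abs_self, sq]
    simpa only [sub_mul, ← smul_eq_C_mul, smul_mul_assoc, map_sub, map_smul, smul_eq_mul,
      sub_nonneg] using h

theorem isPositiveFactor_quadratic (a : ℝ) {b : ℝ} (hb : b ≠ 0) :
    IsPositiveFactor ((X - C a) ^ 2 + C (b ^ 2)) where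
  natDegree_pos := by
    have h : ((X - C a) ^ 2 + C (b ^ 2) : ℝ[X]).natDegree = 2 := by compute_degree!
    exact two_pos.trans_eq h.symm
  eval_pos x _ := by
    simp only [eval_add, eval_pow, eval_sub, eval_X, eval_C]
    positivity
  comp_mulLeft L hL := hL.comp_mulLeft fun q => by
    rw [show ((X - C a) ^ 2 + C (b ^ 2)) * (q * q)
      = (X - C a) * q * ((X - C a) * q) + b ^ 2 • (q * q) by rw [smul_eq_C_mul]; ring]
    rw [map_add, map_smul]
    exact add_nonneg (hL.nonneg_mul_self _) (mul_nonneg (sq_nonneg b) (hL.nonneg_mul_self q))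

theorem linear_dvd_of_isRoot {p : ℝ[X]} {t : ℝ} (ht : t ≠ 0) (hroot : p.IsRoot t) :
    C (t ^ 2) - C t * X ∣ p := by
  have hassoc : C (t ^ 2) - C t * X = C (-t) * (X - C t) := by
    rw [C_neg, C_pow]
    ring
  have hunit : IsUnit (C (-t)) := isUnit_C.mpr (neg_ne_zero.mpr ht).isUnit
  rw [hassoc, hunit.mul_left_dvd]
  exact dvd_iff_isRoot.mpr hroot

theorem quadratic_dvd_of_aeval_eq_zero {p : ℝ[X]} {z : ℂ} (hz : aeval z p = 0) (him : z.im ≠ 0) :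
    (X - C z.re) ^ 2 + C (z.im ^ 2) ∣ p := by
  convert p.quadratic_dvd_of_aeval_eq_zero_im_ne_zero hz him using 1
  rw [Complex.sq_norm, Complex.normSq_apply]
  simp only [map_mul, map_add, map_pow, C_ofNat]
  ring

theorem exists_isPositiveFactor_dvd {p : ℝ[X]} (hdeg : 0 < p.natDegree)
    (hp : ∀ x ∈ Set.Icc (-1 : ℝ) 1, p.eval x ≠ 0) : ∃ r, IsPositiveFactor r ∧ r ∣ p := by
  obtain ⟨z, hz⟩ := IsAlgClosed.exists_aeval_eq_zero ℂ p (natDegree_pos_iff_degree_pos.mp hdeg).ne'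
  by_cases him : z.im = 0
  · obtain ⟨t, rfl⟩ : ∃ t : ℝ, (t : ℂ) = z := ⟨z.re, Complex.ext rfl him.symm⟩
    have hroot : p.IsRoot t := (aeval_algebraMap_eq_zero_iff ℂ t p).mp hz
    have ht : 1 < |t| := by
      by_contra! ht
      exact hp t (abs_le.mp ht) hroot
    have ht0 : t ≠ 0 := abs_pos.mp (one_pos.trans ht)
    exact ⟨_, isPositiveFactor_linear ht, linear_dvd_of_isRoot ht0 hroot⟩
  · exact ⟨_, isPositiveFactor_quadratic z.re him, quadratic_dvd_of_aeval_eq_zero hz him⟩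

namespace IsBoundedPositive

theorem apply_nonneg_of_eval_pos {L : ℝ[X] →ₗ[ℝ] ℝ} (hL : IsBoundedPositive L) {p : ℝ[X]}
    (hp : ∀ x ∈ Set.Icc (-1 : ℝ) 1, 0 < p.eval x) : 0 ≤ L p := by
  induction hn : p.natDegree using Nat.strong_induction_on generalizing L p with
  | _ n ih =>
    rcases n.eq_zero_or_pos with rfl | hpos
    · obtain ⟨c, rfl⟩ := natDegree_eq_zero.mp hn
      have hc : 0 < c := by simpa using hp 0 (by simp)
      rw [← Real.mul_self_sqrt hc.le, C_mul]
      exact hL.nonneg_mul_self _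
    · subst hn
      obtain ⟨r, hr, q, rfl⟩ := exists_isPositiveFactor_dvd hpos fun x hx => (hp x hx).ne'
      have hq0 : q ≠ 0 := by rintro rfl; simp at hpos
      have hr0 : r ≠ 0 := by rintro rfl; simp at hpos
      refine ih q.natDegree ?_ (hr.comp_mulLeft L hL) (fun x hx => ?_) rfl
      · rw [natDegree_mul hr0 hq0]
        exact Nat.lt_add_of_pos_left hr.natDegree_pos
      · exact (pos_iff_pos_of_mul_pos (by simpa using hp x hx)).mp (hr.eval_pos x hx)

theorem apply_nonneg_of_eval_nonneg {L : ℝ[X] →ₗ[ℝ] ℝ} (hL : IsBoundedPositive L) {p : ℝ[X]}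
    (hp : ∀ x ∈ Set.Icc (-1 : ℝ) 1, 0 ≤ p.eval x) : 0 ≤ L p := by
  have hlim : Tendsto (fun ε : ℝ => L p + ε * L 1) (nhdsWithin 0 (Set.Ioi 0)) (nhds (L p)) := by
    have hcont : Continuous fun ε : ℝ => L p + ε * L 1 := by fun_prop
    simpa using (hcont.tendsto 0).mono_left nhdsWithin_le_nhds
  refine ge_of_tendsto hlim (eventually_nhdsWithin_of_forall fun ε (hε : 0 < ε) => ?_)
  rw [← smul_eq_mul, ← map_smul, ← map_add]
  refine hL.apply_nonneg_of_eval_pos fun x hx => ?_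
  simpa using add_pos_of_nonneg_of_pos (hp x hx) hε

theorem exists_measure {L : ℝ[X] →ₗ[ℝ] ℝ} (hL : IsBoundedPositive L) :
    ∃ μ : Measure (Set.Icc (-1 : ℝ) 1), IsFiniteMeasure μ ∧
      ∀ p : ℝ[X], L p = ∫ s, p.eval (s : ℝ) ∂μ := by
  obtain ⟨Λ, hΛ, hext⟩ := exists_nonneg_extension
    (toContinuousMapOnAlgHom (Set.Icc (-1 : ℝ) 1)).toLinearMap
    (map_one (toContinuousMapOnAlgHom (Set.Icc (-1 : ℝ) 1))) L
    fun p hp => hL.apply_nonneg_of_eval_nonneg fun x hx => hp ⟨x, hx⟩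
  obtain ⟨μ, hμ, hint⟩ := exists_measure_of_nonneg Λ hΛ
  exact ⟨μ, hμ, fun p => (hext p).symm.trans (hint _)⟩

end IsBoundedPositive

/-- The linear functional on real polynomials with moments `L (X ^ n) = f n`. -/
noncomputable def momentFunctional (f : ℕ → ℝ) : ℝ[X] →ₗ[ℝ] ℝ :=
  lsum fun n => LinearMap.mulRight ℝ (f n)

theorem momentFunctional_monomial (f : ℕ → ℝ) (n : ℕ) (a : ℝ) :
    momentFunctional f (monomial n a) = a * f n := by
  simp [momentFunctional, lsum_apply, sum_monomial_index]

theorem momentFunctional_X_pow (f : ℕ → ℝ) (n : ℕ) : momentFunctional f (X ^ n) = f n := by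
  rw [← monomial_one_right_eq_X_pow, momentFunctional_monomial, one_mul]

theorem momentFunctional_mul_self (f : ℕ → ℝ) (p : ℝ[X]) :
    momentFunctional f (p * p) = ∑ k : Fin (p.natDegree + 1), ∑ l : Fin (p.natDegree + 1),
      f (k + l) * p.coeff k * p.coeff l := by
  conv_lhs => rw [p.as_sum_range, Finset.sum_range]
  simp only [Finset.sum_mul_sum, map_sum, monomial_mul_monomial, momentFunctional_monomial,
    mul_comm (p.coeff _ * p.coeff _), mul_assoc]

theorem isBoundedPositive_momentFunctional {f : ℕ → ℝ}
    (hf : IsPDKernel fun k l => ((f (k + l) : ℝ) : ℂ)) (hbdd : ∃ B, ∀ n, |f n| ≤ B) :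
    IsBoundedPositive (momentFunctional f) where
  nonneg_mul_self p := by
    have h := hf (p.natDegree + 1) (fun k => k) fun k => (p.coeff k : ℂ)
    simp only [Complex.conj_ofReal] at h
    rw [momentFunctional_mul_self]
    exact_mod_cast h
  bounded_moments := by simpa only [momentFunctional_X_pow] using hbdd

theorem exists_measure_of_isPDKernel_hankel {φ : ℕ → ℂ} (hφ : IsPDKernel fun k l => φ (k + l))
    (hbdd : ∃ B, ∀ n, |(φ n).re| ≤ B) :
    ∃ μ : Measure (Set.Icc (-1 : ℝ) 1), IsFiniteMeasure μ ∧
      ∀ n : ℕ, φ n = ∫ s, (((s : ℝ) ^ n : ℝ) : ℂ) ∂μ := by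
  have hreal (n : ℕ) : ((φ n).re : ℂ) = φ n :=
    Complex.conj_eq_iff_re.mp (by simpa using hφ.conj_symm n 0)
  obtain ⟨μ, hμ, hint⟩ := (isBoundedPositive_momentFunctional (f := fun n => (φ n).re)
    (by simpa only [hreal] using hφ) hbdd).exists_measure
  refine ⟨μ, hμ, fun n => ?_⟩
  rw [integral_complex_ofReal, ← hreal n, ← momentFunctional_X_pow (fun n => (φ n).re) n, hint]
  simp only [eval_pow, eval_X]

end MomentProblem

theorem stmt_2 (φ : ℕ → ℂ) :
    (∀ (V : Type) (G : SimpleGraph V), IsInfTree G →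
        IsPDKernel (fun x y => φ (G.dist x y)))
      ↔ ∃ μ : Measure (Set.Icc (-1 : ℝ) 1), IsFiniteMeasure μ ∧
          ∀ n : ℕ, φ n = ∫ s, (((s : ℝ) ^ n : ℝ) : ℂ) ∂μ := by
  constructor
  · intro h
    have hPD := h _ wordTree wordTree.isInfTree
    exact exists_measure_of_isPDKernel_hankel (wordTree.isPDKernel_hankel hPD)
      ⟨(φ 0).re, wordTree.abs_re_le hPD⟩
  · rintro ⟨μ, hμ, hφ⟩ V G ⟨hconn, hacyc, -⟩
    simp only [hφ]
    exact isPDKernel_integral_pow_dist ⟨hconn, hacyc⟩ μ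
end

section
/- Let 2 ≤ q < ∞. For every s ∈ [-1,1], the function φ : ℕ → ℝ given by φ(n) = P_n^{(q)}(s) belongs to R₊(T_q); that is, the kernel (x,y) ↦ P_{d(x,y)}^{(q)}(s) is positive definite on the (q+1)-homogeneous tree T_q. -/
/-!
Root the tree at an edge, so that every vertex has at most `q` children, and let `p x` be the parent
of `x`. Predict the point mass `δ_x` by `(1 + 1/q) s δ_{p x} - (1/q) δ_{p (p x)}`, except at the two
roots. For the bilinear form with kernel `P_{d(x,y)}(s)` on finitely supported functions, the
three-term recurrence makes the error of this prediction, the innovation at `x`, orthogonal to `δ_y`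
for every `y` that is not further from the root than `x`, apart from `x` and its siblings. Hence
innovations are orthogonal unless they belong to siblings, and on the children of a common parent
their Gram matrix is `c (I - J / q)`, with `J` the all-ones matrix and `c = (1 + 1/q)(1 - s²)`. As
`c ≥ 0` for `|s| ≤ 1`, this block is positive semidefinite by Cauchy-Schwarz. The innovations span,
so the kernel is positive semidefinite over `ℝ`. Complex coefficients are handled by writing each
finite submatrix as a sum of matrices `v vᵀ` with `v` real.
-/

open MeasureTheory Filter Finset
open scoped ComplexOrder

section PosSemidef

lemma posSemidef_ite_add_const {n : Type*} [Finite n] [DecidableEq n] {a b : ℝ} (ha : 0 ≤ a)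
    (hab : 0 ≤ a + Nat.card n * b) :
    (Matrix.of fun i j : n => (if i = j then a else 0) + b).PosSemidef := by
  cases nonempty_fintype n
  refine .of_dotProduct_mulVec_nonneg (by ext; simp [eq_comm]) fun x => ?_
  have expand : star x ⬝ᵥ ((Matrix.of fun i j : n => (if i = j then a else 0) + b).mulVec x)
      = a * ∑ i, x i ^ 2 + b * (∑ i, x i) ^ 2 := by
    simp only [dotProduct, Matrix.mulVec, Pi.star_apply, star_trivial, Matrix.of_apply, add_mul,
      ite_mul, zero_mul, sum_add_distrib, sum_ite_eq, mem_univ, if_true, ← mul_sum, mul_add,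
      ← sum_mul, mul_left_comm _ a, mul_left_comm _ b, ← sq]
  have sum_sq_nonneg : 0 ≤ ∑ i, x i ^ 2 := sum_nonneg fun i _ => sq_nonneg (x i)
  have cauchy_schwarz : (∑ i, x i) ^ 2 ≤ Nat.card n * ∑ i, x i ^ 2 := by
    simpa using sq_sum_le_card_mul_sum_sq (s := univ) (f := x)
  rw [expand]
  rcases le_total 0 b with hb | hb
  · positivity
  · calc 0 ≤ (a + Nat.card n * b) * ∑ i, x i ^ 2 := mul_nonneg hab sum_sq_nonneg
      _ = a * ∑ i, x i ^ 2 + b * (Nat.card n * ∑ i, x i ^ 2) := by ring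
      _ ≤ a * ∑ i, x i ^ 2 + b * (∑ i, x i) ^ 2 := by
        linarith [mul_le_mul_of_nonpos_left cauchy_schwarz hb]

lemma posSemidef_of_fiberwise {m k R : Type*} [Ring R] [PartialOrder R] [StarRing R]
    [AddLeftMono R] {A : Matrix m m R} (κ : m → k) (hoff : ∀ i j, κ i ≠ κ j → A i j = 0)
    (hdiag : ∀ c, (A.submatrix ((↑) : {i // κ i = c} → m) (↑)).PosSemidef) : A.PosSemidef := by
  classical
  constructor
  · ext i j
    by_cases hij : κ j = κ i
    · exact (hdiag (κ i)).isHermitian.apply ⟨i, rfl⟩ ⟨j, hij⟩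
    · simp [hoff _ _ hij, hoff _ _ (Ne.symm hij)]
  · intro x
    have fiber_sum (c : k) (f : m → R) :
        ∑ i ∈ x.support with κ i = c, f i
          = ∑ i ∈ (x.subtypeDomain fun i => κ i = c).support, f i := by
      rw [Finsupp.support_subtypeDomain, Finset.sum_subtype_eq_sum_filter]
    have inner_sum : ∀ i, ∑ j ∈ x.support, star (x i) * A i j * x j
        = ∑ j ∈ x.support with κ j = κ i, star (x i) * A i j * x j := by
      intro i
      refine (sum_filter_of_ne fun j _ hj => ?_).symm
      contrapose! hj
      simp [hoff i j hj.symm]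
    calc (0 : R)
      _ ≤ ∑ c ∈ x.support.image κ, ∑ i ∈ x.support with κ i = c,
          ∑ j ∈ x.support with κ j = c, star (x i) * A i j * x j := by
        refine sum_nonneg fun c _ => ?_
        simp only [fiber_sum c]
        exact (hdiag c).2 (x.subtypeDomain fun i => κ i = c)
      _ = ∑ c ∈ x.support.image κ, ∑ i ∈ x.support with κ i = c,
          ∑ j ∈ x.support, star (x i) * A i j * x j := by
        refine sum_congr rfl fun c _ => sum_congr rfl fun i hi => ?_
        rw [inner_sum, (mem_filter.1 hi).2]
      _ = _ := sum_fiberwise_of_maps_to (fun i hi => mem_image_of_mem κ hi) _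

section KernelForm

variable {R X : Type*} [CommSemiring R]

/-- The bilinear form on finitely supported functions whose values at point masses are the entries
of `K`. It plays the role of `Matrix.toBilin'` for an infinite index type. -/
noncomputable def kernelForm (K : Matrix X X R) : LinearMap.BilinForm R (X →₀ R) :=
  Finsupp.linearCombination R fun x => Finsupp.linearCombination R (K x)

lemma kernelForm_single_single (K : Matrix X X R) (x y : X) :
    kernelForm K (Finsupp.single x 1) (Finsupp.single y 1) = K x y := by
  simp [kernelForm]

lemma kernelForm_gram {ι M : Type*} [AddCommMonoid M] [Module R M] (B : LinearMap.BilinForm R M)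
    (v : ι → M) (a b : ι →₀ R) :
    kernelForm (.of fun i j => B (v i) (v j)) a b
      = B (Finsupp.linearCombination R v a) (Finsupp.linearCombination R v b) := by
  suffices kernelForm (.of fun i j => B (v i) (v j))
      = B.compl₁₂ (Finsupp.linearCombination R v) (Finsupp.linearCombination R v) by
    rw [this, LinearMap.compl₁₂_apply]
  ext i j
  simp [kernelForm]

lemma kernelForm_comm [StarRing R] [TrivialStar R] {K : Matrix X X R} (hK : K.IsHermitian)
    (u v : X →₀ R) :
    kernelForm K u v = kernelForm K v u := by
  suffices kernelForm K = (kernelForm K).flip from LinearMap.congr_fun₂ this u v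
  ext x y
  simpa [kernelForm] using hK.apply y x

end KernelForm

section KernelFormPosSemidef

variable {R X : Type*} [CommRing R] [PartialOrder R] [StarRing R] [TrivialStar R]

lemma posSemidef_iff_kernelForm_nonneg {K : Matrix X X R} :
    K.PosSemidef ↔ K.IsHermitian ∧ ∀ u, 0 ≤ kernelForm K u u := by
  refine and_congr_right fun _ => forall_congr' fun u => ?_
  simp [kernelForm, Finsupp.linearCombination_apply, Finsupp.sum, LinearMap.sum_apply, mul_sum,
    mul_assoc, mul_comm (K _ _)]

lemma posSemidef_of_gram_posSemidef {ι : Type*} {K : Matrix X X R} (hK : K.IsHermitian)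
    {v : ι → X →₀ R} (hspan : ∀ x, Finsupp.single x 1 ∈ Submodule.span R (Set.range v))
    (hgram : (Matrix.of fun i j => kernelForm K (v i) (v j)).PosSemidef) : K.PosSemidef := by
  refine posSemidef_iff_kernelForm_nonneg.2 ⟨hK, fun u => ?_⟩
  have hu : u ∈ Submodule.span R (Set.range v) := by
    rw [← Finsupp.sum_single u]
    refine Submodule.sum_mem _ fun x _ => ?_
    simpa using Submodule.smul_mem _ (u x) (hspan x)
  obtain ⟨a, rfl⟩ := (Finsupp.mem_span_range_iff_exists_finsupp).1 hu
  rw [← Finsupp.linearCombination_apply, ← kernelForm_gram]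
  exact (posSemidef_iff_kernelForm_nonneg.1 hgram).2 a

end KernelFormPosSemidef

lemma isPDKernel_ofReal {X : Type*} {K : Matrix X X ℝ} (hK : K.PosSemidef) :
    IsPDKernel fun x y => (K x y : ℂ) := by
  intro n x z
  obtain ⟨m, v, hv⟩ := Matrix.posSemidef_iff_eq_sum_vecMulVec.1 (hK.submatrix x)
  have entry (i j : Fin n) : K (x i) (x j) = ∑ k, v k i * v k j := by
    simpa [Matrix.sum_apply, Matrix.vecMulVec_apply] using congr_fun₂ hv i j
  have sum_normSq : ∑ i, ∑ j, (K (x i) (x j) : ℂ) * starRingEnd ℂ (z i) * z j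
      = ∑ k, star (∑ i, v k i * z i) * ∑ j, v k j * z j := by
    calc ∑ i, ∑ j, (K (x i) (x j) : ℂ) * starRingEnd ℂ (z i) * z j
      _ = ∑ i, ∑ j, ∑ k, star (v k i * z i) * (v k j * z j) := by
        simp only [entry, Complex.ofReal_sum, Complex.ofReal_mul, sum_mul, star_mul',
          Complex.star_def, Complex.conj_ofReal]
        congr! 3
        ring
      _ = ∑ i, ∑ k, ∑ j, star (v k i * z i) * (v k j * z j) :=
        sum_congr rfl fun i _ => sum_comm
      _ = ∑ k, ∑ i, ∑ j, star (v k i * z i) * (v k j * z j) := sum_comm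
      _ = ∑ k, star (∑ i, v k i * z i) * ∑ j, v k j * z j := by
        simp only [star_sum, sum_mul_sum]
  rw [sum_normSq]
  exact sum_nonneg fun k _ => star_mul_self_nonneg _

end PosSemidef

section Tree

variable {V : Type*} {G : SimpleGraph V}

lemma exists_adj_dist_eq (hG : G.Connected) {x y : V} (h : y ≠ x) :
    ∃ w, G.Adj x w ∧ G.dist y x = G.dist y w + 1 := by
  obtain ⟨r, hr⟩ := hG.exists_walk_length_eq_dist x y
  cases r with
  | nil => exact absurd rfl h
  | @cons _ w _ hadj r =>
    refine ⟨w, hadj, ?_⟩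
    have hwy : G.dist w y ≤ r.length := SimpleGraph.dist_le r
    have hxy : G.dist x y ≤ 1 + G.dist w y :=
      SimpleGraph.dist_eq_one_iff_adj.2 hadj ▸ hG.dist_triangle
    rw [SimpleGraph.Walk.length_cons] at hr
    rw [SimpleGraph.dist_comm (u := y), SimpleGraph.dist_comm (u := y)]
    omega

lemma eq_of_adj_of_dist_eq (hG : G.IsTree) {x y w w' : V} (hw : G.Adj x w) (hw' : G.Adj x w')
    (hd : G.dist y x = G.dist y w + 1) (hd' : G.dist y x = G.dist y w' + 1) : w = w' := by
  have exists_isPath_penultimate {u : V} (hu : G.Adj x u) (h : G.dist y x = G.dist y u + 1) :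
      ∃ r : G.Walk y x, r.IsPath ∧ r.penultimate = u := by
    obtain ⟨r, hr⟩ := hG.connected.exists_walk_length_eq_dist y u
    refine ⟨r.concat hu.symm, SimpleGraph.Walk.isPath_of_length_eq_dist _ ?_, by simp⟩
    rw [SimpleGraph.Walk.length_concat, hr, h]
  obtain ⟨r, hr, rfl⟩ := exists_isPath_penultimate hw hd
  obtain ⟨r', hr', rfl⟩ := exists_isPath_penultimate hw' hd'
  rw [(hG.existsUnique_path y x).unique hr hr']

lemma dist_eq_dist_add_dist_of_adj (hG : G.IsTree) {x y b w : V} (hbw : G.Adj b w)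
    (hxw : G.dist x w = G.dist x b + 1) (hyb : G.dist y b = G.dist y w + 1) :
    G.dist x y = G.dist x b + G.dist y b := by
  induction hn : G.dist y w generalizing b w with
  | zero =>
    obtain rfl := hG.connected.dist_eq_zero_iff.1 hn
    omega
  | succ n ih =>
    obtain ⟨w', hww', hyw⟩ :=
      exists_adj_dist_eq hG.connected (x := w) (y := y) (by rintro rfl; simp at hn)
    rcases hG.dist_eq_dist_add_one_of_adj x hww' with hx | hx
    · obtain rfl := eq_of_adj_of_dist_eq hG hbw.symm hww' hxw hx
      omega
    · have := ih hww' hx hyw (by omega)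
      omega

lemma dist_eq_two_of_adj (hG : G.IsTree) {x b y : V} (hxb : G.Adj x b) (hby : G.Adj b y)
    (hne : x ≠ y) : G.dist x y = 2 := by
  have hdxb := SimpleGraph.dist_eq_one_iff_adj.2 hxb
  have hdxy : G.dist x y ≠ 0 := mt hG.connected.dist_eq_zero_iff.1 hne
  have := hG.dist_eq_dist_add_one_of_adj x hby
  omega

/-- `p` sends every vertex to its parent, for the tree `G` rooted at the edge joining `o` to `p o`.
The vertices `o` and `p o` are each other's parent and all others are further from `o` than their
parent. An edge is used instead of a vertex so that every vertex has the same number of possible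
children. -/
structure IsEdgeRooting (G : SimpleGraph V) (o : V) (p : V → V) : Prop where
  adj (x : V) : G.Adj x (p x)
  dist_eq {x : V} (hx : x ≠ o) : G.dist o x = G.dist o (p x) + 1

lemma exists_isEdgeRooting [Nontrivial V] (hG : G.Connected) (o : V) :
    ∃ p, IsEdgeRooting G o p := by
  classical
  obtain ⟨e, he⟩ := hG.preconnected.exists_adj_of_nontrivial o
  choose! p hp using fun x (hx : x ≠ o) => exists_adj_dist_eq hG hx.symm
  refine ⟨Function.update p o e, fun x => ?_, fun {x} hx => ?_⟩
  · obtain rfl | hx := eq_or_ne x o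
    · simpa using he
    · simpa [hx] using (hp x hx).1
  · simpa [hx] using (hp x hx).2

namespace IsEdgeRooting

variable {o : V} {p : V → V} (hp : IsEdgeRooting G o p)

include hp

lemma parent_parent_root : p (p o) = o := by
  have hd := hp.dist_eq (hp.adj o).ne'
  rw [SimpleGraph.dist_eq_one_iff_adj.2 (hp.adj o)] at hd
  exact (((hp.adj o).reachable.trans (hp.adj (p o)).reachable).dist_eq_zero_iff.1 (by omega)).symm

lemma parent_parent_eq_self_iff {x : V} : p (p x) = x ↔ x = o ∨ x = p o := by
  constructor
  · intro hx
    by_contra! hne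
    have hpx : p x ≠ o := fun h => hne.2 (by rw [← h, hx])
    have hd := hp.dist_eq hpx
    rw [hx, hp.dist_eq hne.1] at hd
    omega
  · rintro (rfl | rfl) <;> simp only [hp.parent_parent_root]

lemma ne_root {x : V} (hx : p (p x) ≠ x) : x ≠ o :=
  fun h => hx (hp.parent_parent_eq_self_iff.2 (.inl h))

lemma dist_le_dist_of_parent_parent {x y : V} (hx : p (p x) = x) (hy : p (p y) ≠ y) :
    G.dist o x ≤ G.dist o y := by
  have hoy := hp.dist_eq (hp.ne_root hy)
  obtain rfl | rfl := hp.parent_parent_eq_self_iff.1 hx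
  · simp
  · rw [SimpleGraph.dist_eq_one_iff_adj.2 (hp.adj o), hoy]
    omega

lemma parent_eq_of_adj (hG : G.IsTree) {x y : V} (hxy : G.Adj x y) (hne : y ≠ p x) :
    p y = x := by
  have closer_eq_parent {u v : V} (huv : G.Adj u v) (h : G.dist o u = G.dist o v + 1) :
      v = p u :=
    eq_of_adj_of_dist_eq hG huv (hp.adj u) h (hp.dist_eq (by rintro rfl; simp at h))
  rcases hG.dist_eq_dist_add_one_of_adj o hxy with h | h
  · exact absurd (closer_eq_parent hxy h) hne
  · exact (closer_eq_parent hxy.symm h).symm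

lemma parent_parent_eq_of_dist_lt {x y : V} (hx : p (p x) ≠ x) (hlt : G.dist o y < G.dist o x)
    (hpar : p y = p x) : p (p y) = y := by
  by_contra hy
  rw [hp.dist_eq (hp.ne_root hy), hp.dist_eq (hp.ne_root hx), hpar] at hlt
  exact lt_irrefl _ hlt

/-- `y` is not a descendant of `p x`, so its geodesic to `x` arrives through `p (p x)` and `p x`. -/
lemma dist_eq_dist_parent_add_one (hG : G.IsTree) {x y : V} (hx : p (p x) ≠ x)
    (hle : G.dist o y ≤ G.dist o x) (hsib : p y = p x → p (p y) = y) (hne : y ≠ p x) :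
    G.dist y (p x) = G.dist y (p (p x)) + 1 ∧ G.dist y x = G.dist y (p x) + 1 := by
  obtain ⟨w, hw, hyw⟩ := exists_adj_dist_eq hG.connected hne
  obtain rfl : w = p (p x) := by
    by_contra hw_ne
    have hpw : p w = p x := hp.parent_eq_of_adj hG hw hw_ne
    have hwo : w ≠ o := by
      rintro rfl
      exact hw_ne (by rw [← hpw, hp.parent_parent_root])
    have how := hpw ▸ hp.dist_eq hwo
    have hoy := dist_eq_dist_add_dist_of_adj hG hw how hyw
    have hox := hp.dist_eq (hp.ne_root hx)
    obtain rfl := hG.connected.dist_eq_zero_iff.1 (show G.dist y w = 0 by omega)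
    exact hw_ne (hpw ▸ (hsib hpw).symm)
  refine ⟨hyw, (hG.dist_eq_dist_add_one_of_adj y (hp.adj x)).resolve_right fun h => hx ?_⟩
  exact eq_of_adj_of_dist_eq hG (hp.adj (p x)) (hp.adj x).symm hyw h

lemma encard_children_le (b : V) {q : ℕ} (hdeg : (G.neighborSet b).encard ≤ q + 1) :
    {x | p (p x) ≠ x ∧ p x = b}.encard ≤ q := by
  have hsub : insert (p b) {x | p (p x) ≠ x ∧ p x = b} ⊆ G.neighborSet b := by
    refine Set.insert_subset (hp.adj b) ?_
    rintro x ⟨-, rfl⟩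
    exact (hp.adj x).symm
  have hnotMem : p b ∉ {x | p (p x) ≠ x ∧ p x = b} := fun ⟨h, hb⟩ => h (congrArg p hb)
  have := (Set.encard_le_encard hsub).trans hdeg
  rw [Set.encard_insert_of_notMem hnotMem] at this
  exact (ENat.add_le_add_iff_right ENat.one_ne_top).1 this

end IsEdgeRooting

end Tree

section Innovation

variable {V : Type*} {G : SimpleGraph V} {o : V} {p : V → V} {q : ℕ} {s : ℝ}

/-- The matrix with entries `P_{d(x,y)}(s)`. -/
noncomputable def treeKernel (G : SimpleGraph V) (q : ℕ) (s : ℝ) : Matrix V V ℝ :=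
  .of fun x y => treeP q (G.dist x y) s

open Classical in
/-- The point mass at `x` minus its prediction, read off the recurrence of `treeP`, from the point
masses at the parent and the grandparent of `x`. The two roots `x = p (p x)` are not predicted. -/
noncomputable def innovation (q : ℕ) (s : ℝ) (p : V → V) (x : V) : V →₀ ℝ :=
  if p (p x) = x then Finsupp.single x 1
  else Finsupp.single x 1 - ((1 + 1 / (q : ℝ)) * s) • Finsupp.single (p x) 1
    + (1 / (q : ℝ)) • Finsupp.single (p (p x)) 1

open Classical in
/-- The label of the class of siblings of `x`: their common parent, or `none` for the two roots
`x = p (p x)`. -/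
noncomputable def siblingClass (p : V → V) (x : V) : Option V :=
  if p (p x) = x then none else some (p x)

lemma siblingClass_eq_none_iff {x : V} : siblingClass p x = none ↔ p (p x) = x := by
  simp [siblingClass]

lemma siblingClass_eq_some_iff {x b : V} :
    siblingClass p x = some b ↔ p (p x) ≠ x ∧ p x = b := by
  simp [siblingClass]

lemma innovation_of_root {x : V} (hx : p (p x) = x) : innovation q s p x = Finsupp.single x 1 :=
  if_pos hx

lemma innovation_of_ne {x : V} (hx : p (p x) ≠ x) :
    innovation q s p x = Finsupp.single x 1 - ((1 + 1 / (q : ℝ)) * s) • Finsupp.single (p x) 1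
      + (1 / (q : ℝ)) • Finsupp.single (p (p x)) 1 :=
  if_neg hx

lemma isHermitian_treeKernel : (treeKernel G q s).IsHermitian := by
  ext x y
  simp [treeKernel, SimpleGraph.dist_comm]

lemma kernelForm_treeKernel_single_single (x y : V) :
    kernelForm (treeKernel G q s) (Finsupp.single x 1) (Finsupp.single y 1)
      = treeP q (G.dist x y) s :=
  kernelForm_single_single _ x y

lemma kernelForm_single_innovation (y : V) {x : V} (hx : p (p x) ≠ x) :
    kernelForm (treeKernel G q s) (Finsupp.single y 1) (innovation q s p x)
      = treeP q (G.dist y x) s - (1 + 1 / (q : ℝ)) * s * treeP q (G.dist y (p x)) s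
        + 1 / (q : ℝ) * treeP q (G.dist y (p (p x))) s := by
  simp only [innovation_of_ne hx, map_add, map_sub, map_smul, smul_eq_mul,
    kernelForm_treeKernel_single_single]

namespace IsEdgeRooting

variable (hp : IsEdgeRooting G o p)

include hp

lemma kernelForm_single_innovation_self (hG : G.IsTree) {x : V} (hx : p (p x) ≠ x) :
    kernelForm (treeKernel G q s) (Finsupp.single x 1) (innovation q s p x)
      = (1 + 1 / (q : ℝ)) * (1 - s ^ 2) * (1 - 1 / q) := by
  rw [kernelForm_single_innovation x hx, SimpleGraph.dist_self,
    SimpleGraph.dist_eq_one_iff_adj.2 (hp.adj x),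
    dist_eq_two_of_adj hG (hp.adj x) (hp.adj (p x)) hx.symm]
  simp only [treeP]
  ring

lemma kernelForm_single_innovation_sibling (hG : G.IsTree) {x y : V} (hx : p (p x) ≠ x)
    (hy : p (p y) ≠ y) (hpar : p y = p x) (hne : y ≠ x) :
    kernelForm (treeKernel G q s) (Finsupp.single y 1) (innovation q s p x)
      = (1 + 1 / (q : ℝ)) * (1 - s ^ 2) * (-(1 / q)) := by
  have hadj : G.Adj y (p x) := hpar ▸ hp.adj y
  rw [kernelForm_single_innovation y hx, dist_eq_two_of_adj hG hadj (hp.adj x).symm hne,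
    SimpleGraph.dist_eq_one_iff_adj.2 hadj,
    dist_eq_two_of_adj hG hadj (hp.adj (p x)) (hpar ▸ hy.symm)]
  simp only [treeP]
  ring

lemma kernelForm_single_innovation_eq_zero (hG : G.IsTree) {x y : V} (hx : p (p x) ≠ x)
    (hle : G.dist o y ≤ G.dist o x) (hsib : p y = p x → p (p y) = y) :
    kernelForm (treeKernel G q s) (Finsupp.single y 1) (innovation q s p x) = 0 := by
  rw [kernelForm_single_innovation y hx]
  obtain rfl | hne := eq_or_ne y (p x)
  · rw [SimpleGraph.dist_self, SimpleGraph.dist_eq_one_iff_adj.2 (hp.adj x).symm,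
      SimpleGraph.dist_eq_one_iff_adj.2 (hp.adj (p x))]
    simp only [treeP]
    ring
  · obtain ⟨hd, hd'⟩ := hp.dist_eq_dist_parent_add_one hG hx hle hsib hne
    rw [hd', hd]
    simp only [treeP]
    ring

lemma kernelForm_innovation_innovation (hG : G.IsTree) {x y : V} (hx : p (p x) ≠ x)
    (hle : G.dist o y ≤ G.dist o x) :
    kernelForm (treeKernel G q s) (innovation q s p y) (innovation q s p x)
      = kernelForm (treeKernel G q s) (Finsupp.single y 1) (innovation q s p x) := by
  by_cases hy : p (p y) = y
  · rw [innovation_of_root hy]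
  have hoy := hp.dist_eq (hp.ne_root hy)
  have parent_orthogonal : kernelForm (treeKernel G q s) (Finsupp.single (p y) 1)
      (innovation q s p x) = 0 :=
    hp.kernelForm_single_innovation_eq_zero hG hx (by omega)
      (hp.parent_parent_eq_of_dist_lt hx (by omega))
  have grandparent_orthogonal : kernelForm (treeKernel G q s) (Finsupp.single (p (p y)) 1)
      (innovation q s p x) = 0 := by
    obtain hpy | hpy := eq_or_ne (p y) o
    · have hroot : p (p (p (p y))) = p (p y) := by rw [hpy, hp.parent_parent_root]
      exact hp.kernelForm_single_innovation_eq_zero hG hx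
        (hp.dist_le_dist_of_parent_parent hroot hx) fun _ => hroot
    · have hopy := hp.dist_eq hpy
      exact hp.kernelForm_single_innovation_eq_zero hG hx (by omega)
        (hp.parent_parent_eq_of_dist_lt hx (by omega))
  rw [innovation_of_ne hy]
  simp only [map_add, map_sub, map_smul, LinearMap.add_apply, LinearMap.sub_apply,
    LinearMap.smul_apply, parent_orthogonal, grandparent_orthogonal, smul_zero, sub_zero, add_zero]

lemma kernelForm_innovation_eq_zero (hG : G.IsTree) {x y : V}
    (hne : siblingClass p x ≠ siblingClass p y) :
    kernelForm (treeKernel G q s) (innovation q s p x) (innovation q s p y) = 0 := by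
  have of_dist_le {x y : V} (hne : siblingClass p x ≠ siblingClass p y) (hx : p (p x) ≠ x)
      (hle : G.dist o y ≤ G.dist o x) :
      kernelForm (treeKernel G q s) (innovation q s p y) (innovation q s p x) = 0 := by
    rw [hp.kernelForm_innovation_innovation hG hx hle]
    refine hp.kernelForm_single_innovation_eq_zero hG hx hle fun hpar => ?_
    by_contra hy
    exact hne (by rw [siblingClass_eq_some_iff.2 ⟨hx, rfl⟩, siblingClass_eq_some_iff.2 ⟨hy, hpar⟩])
  by_cases hx : p (p x) = x
  · have hy : p (p y) ≠ y := fun hy =>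
      hne (by rw [siblingClass_eq_none_iff.2 hx, siblingClass_eq_none_iff.2 hy])
    exact of_dist_le hne.symm hy (hp.dist_le_dist_of_parent_parent hx hy)
  by_cases hle : G.dist o y ≤ G.dist o x
  · rw [kernelForm_comm isHermitian_treeKernel, of_dist_le hne hx hle]
  · have hy : p (p y) ≠ y := fun hy => hle (hp.dist_le_dist_of_parent_parent hy hx)
    exact of_dist_le hne.symm hy (by omega)

lemma kernelForm_innovation_roots [DecidableEq V] {x y : V} (hx : p (p x) = x)
    (hy : p (p y) = y) :
    kernelForm (treeKernel G q s) (innovation q s p x) (innovation q s p y)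
      = (if x = y then 1 - s else 0) + s := by
  rw [innovation_of_root hx, innovation_of_root hy, kernelForm_treeKernel_single_single]
  obtain rfl | hne := eq_or_ne x y
  · simp [treeP]
  · have hadj : G.Adj x y := by
      obtain rfl | rfl := hp.parent_parent_eq_self_iff.1 hx <;>
        obtain rfl | rfl := hp.parent_parent_eq_self_iff.1 hy
      exacts [absurd rfl hne, hp.adj _, (hp.adj _).symm, absurd rfl hne]
    simp [SimpleGraph.dist_eq_one_iff_adj.2 hadj, hne, treeP]

lemma kernelForm_innovation_siblings (hG : G.IsTree) [DecidableEq V] {x y : V}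
    (hx : p (p x) ≠ x) (hy : p (p y) ≠ y) (hpar : p x = p y) :
    kernelForm (treeKernel G q s) (innovation q s p x) (innovation q s p y)
      = (if x = y then (1 + 1 / (q : ℝ)) * (1 - s ^ 2) else 0)
        + (1 + 1 / (q : ℝ)) * (1 - s ^ 2) * (-(1 / q)) := by
  have hle : G.dist o x ≤ G.dist o y := by
    rw [hp.dist_eq (hp.ne_root hx), hp.dist_eq (hp.ne_root hy), hpar]
  rw [hp.kernelForm_innovation_innovation hG hy hle]
  obtain rfl | hne := eq_or_ne x y
  · rw [hp.kernelForm_single_innovation_self hG hx, if_pos rfl]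
    ring
  · rw [hp.kernelForm_single_innovation_sibling hG hy hx hpar hne, if_neg hne, zero_add]

lemma posSemidef_gram_roots (hs : s ∈ Set.Icc (-1) 1) :
    (Matrix.of fun x y : {x // siblingClass p x = none} =>
      kernelForm (treeKernel G q s) (innovation q s p x) (innovation q s p y)).PosSemidef := by
  classical
  have roots_eq : {x | siblingClass p x = none} = {o, p o} := by
    ext x
    simp [siblingClass_eq_none_iff, hp.parent_parent_eq_self_iff]
  have card_roots : Nat.card {x // siblingClass p x = none} = 2 :=
    (congrArg Set.ncard roots_eq).trans (Set.ncard_pair (hp.adj o).ne)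
  have : Finite {x // siblingClass p x = none} := Nat.finite_of_card_ne_zero (by omega)
  have entry (x y : {x // siblingClass p x = none}) :
      kernelForm (treeKernel G q s) (innovation q s p x) (innovation q s p y)
        = (if x = y then 1 - s else 0) + s := by
    simpa only [Subtype.ext_iff] using hp.kernelForm_innovation_roots
      (siblingClass_eq_none_iff.1 x.2) (siblingClass_eq_none_iff.1 y.2)
  simp only [entry]
  refine posSemidef_ite_add_const (by linarith [hs.2]) ?_
  rw [card_roots]
  push_cast
  linarith [hs.1]

lemma posSemidef_gram_siblings (hG : G.IsTree) (hs : s ∈ Set.Icc (-1) 1) (b : V)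
    (hdeg : (G.neighborSet b).encard ≤ q + 1) :
    (Matrix.of fun x y : {x // siblingClass p x = some b} =>
      kernelForm (treeKernel G q s) (innovation q s p x) (innovation q s p y)).PosSemidef := by
  classical
  obtain ⟨hfin, hcard⟩ : {x | siblingClass p x = some b}.Finite ∧
      {x | siblingClass p x = some b}.ncard ≤ q := by
    simp only [siblingClass_eq_some_iff]
    exact Set.encard_le_coe_iff_finite_ncard_le.1 (hp.encard_children_le b hdeg)
  have : Finite {x // siblingClass p x = some b} := hfin
  set c := (1 + 1 / (q : ℝ)) * (1 - s ^ 2)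
  have entry (x y : {x // siblingClass p x = some b}) :
      kernelForm (treeKernel G q s) (innovation q s p x) (innovation q s p y)
        = (if x = y then c else 0) + c * (-(1 / q)) := by
    obtain ⟨hx, hxb⟩ := siblingClass_eq_some_iff.1 x.2
    obtain ⟨hy, hyb⟩ := siblingClass_eq_some_iff.1 y.2
    simpa only [Subtype.ext_iff] using
      hp.kernelForm_innovation_siblings hG hx hy (hxb.trans hyb.symm)
  have c_nonneg : 0 ≤ c := mul_nonneg (by positivity) (by nlinarith [hs.1, hs.2])
  have card_div_le_one : (Nat.card {x // siblingClass p x = some b} : ℝ) / q ≤ 1 :=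
    div_le_one_of_le₀ (by exact_mod_cast hcard) q.cast_nonneg
  simp only [entry]
  refine posSemidef_ite_add_const c_nonneg ?_
  calc 0 ≤ c * (1 - Nat.card {x // siblingClass p x = some b} / q) :=
        mul_nonneg c_nonneg (by linarith)
    _ = c + Nat.card {x // siblingClass p x = some b} * (c * (-(1 / q))) := by ring

lemma single_mem_span_innovation (q : ℕ) (s : ℝ) (x : V) :
    Finsupp.single x 1 ∈ Submodule.span ℝ (Set.range (innovation q s p)) := by
  have innovation_mem (y : V) :
      innovation q s p y ∈ Submodule.span ℝ (Set.range (innovation q s p)) :=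
    Submodule.subset_span ⟨y, rfl⟩
  have root_mem {y : V} (hy : p (p y) = y) :
      Finsupp.single y 1 ∈ Submodule.span ℝ (Set.range (innovation q s p)) :=
    innovation_of_root (q := q) (s := s) hy ▸ innovation_mem y
  induction hn : G.dist o x using Nat.strong_induction_on generalizing x with
  | _ n ih =>
    by_cases hx : p (p x) = x
    · exact root_mem hx
    have hox := hp.dist_eq (hp.ne_root hx)
    have parent_mem := ih _ (by omega) (p x) rfl
    have grandparent_mem :
        Finsupp.single (p (p x)) 1 ∈ Submodule.span ℝ (Set.range (innovation q s p)) := by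
      obtain hpx | hpx := eq_or_ne (p x) o
      · exact root_mem (by rw [hpx, hp.parent_parent_root])
      · have hopx := hp.dist_eq hpx
        exact ih _ (by omega) (p (p x)) rfl
    have single_eq : (Finsupp.single x 1 : V →₀ ℝ)
        = innovation q s p x + ((1 + 1 / (q : ℝ)) * s) • Finsupp.single (p x) 1
          - (1 / (q : ℝ)) • Finsupp.single (p (p x)) 1 := by
      rw [innovation_of_ne hx]
      abel
    rw [single_eq]
    exact sub_mem (add_mem (innovation_mem x) (Submodule.smul_mem _ _ parent_mem))
      (Submodule.smul_mem _ _ grandparent_mem)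

lemma posSemidef_treeKernel (hG : G.IsTree) (hs : s ∈ Set.Icc (-1) 1)
    (hdeg : ∀ b, (G.neighborSet b).encard ≤ q + 1) : (treeKernel G q s).PosSemidef := by
  refine posSemidef_of_gram_posSemidef isHermitian_treeKernel
    (hp.single_mem_span_innovation q s) ?_
  refine posSemidef_of_fiberwise (siblingClass p)
    (fun x y hne => hp.kernelForm_innovation_eq_zero hG hne) ?_
  rintro (_ | b)
  · exact hp.posSemidef_gram_roots hs
  · exact hp.posSemidef_gram_siblings hG hs b (hdeg b)

end IsEdgeRooting

end Innovation

lemma posSemidef_treeKernel {V : Type*} {G : SimpleGraph V} {q : ℕ} {s : ℝ} (hG : G.IsTree)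
    (hs : s ∈ Set.Icc (-1) 1) (hdeg : ∀ v, (G.neighborSet v).encard ≤ q + 1) :
    (treeKernel G q s).PosSemidef := by
  classical
  cases subsingleton_or_nontrivial V
  · convert posSemidef_ite_add_const (n := V) (a := 0) (b := 1) le_rfl (by simp) using 1
    ext x y
    simp [treeKernel, Subsingleton.elim x y, treeP]
  · obtain ⟨o⟩ := hG.connected.nonempty
    obtain ⟨p, hp⟩ := exists_isEdgeRooting hG.connected o
    exact hp.posSemidef_treeKernel hG hs hdeg

theorem stmt_4_general {V : Type*} {G : SimpleGraph V} (hG : G.IsTree) {q : ℕ}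
    (hdeg : ∀ v, (G.neighborSet v).encard ≤ q + 1) {s : ℝ} (hs : s ∈ Set.Icc (-1 : ℝ) 1) :
    IsPDKernel fun x y => ((treeP q (G.dist x y) s : ℝ) : ℂ) :=
  isPDKernel_ofReal (posSemidef_treeKernel hG hs hdeg)

theorem stmt_4 (q : ℕ) (hq : 2 ≤ q) (s : ℝ) (hs : s ∈ Set.Icc (-1 : ℝ) 1)
    (V : Type) (G : SimpleGraph V) (hG : IsHomTree G q) :
    IsPDKernel (fun x y => ((treeP q (G.dist x y) s : ℝ) : ℂ)) := by
  obtain ⟨hconn, hacyc, hcard⟩ := hG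
  refine stmt_4_general ⟨hconn, hacyc⟩ (fun v => ?_) hs
  exact (Set.encard_le_coe_iff_finite_ncard_le (k := q + 1)).2
    ⟨Set.finite_of_ncard_ne_zero (by rw [hcard]; omega), (hcard v).le⟩
end
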